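/- Let p ∈ (1/2,1] and ρ ∈ C¹([0,1];(0,1)). There exists a constant C (depending only on p and ρ) such that for every integer N ≥ 1, every σ ∈ [0,N], and every probability density f : Ω_N → (0,∞) with respect to ν_ρ^N (the product measure with marginals ρ(i/N)), one has, with μ = f ν_ρ^N, ⟨√f, L_exc[√f]⟩_{ν_ρ^N} ≤ −((σ−1)/4) D_exc^N(μ; ν_ρ^N) + C. -/

import Mathlib

open Finset

/-- The space of particle configurations on `{0,1,…,N}`. -/
abbrev Cfg (N : ℕ) := Fin (N + 1) → Bool

/-- The real value (`0` or `1`) of an occupation variable. -/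
def ind (b : Bool) : ℝ := if b then 1 else 0

/-- The configuration obtained by swapping the values at sites `i` and `i+1`. -/
def swap {N : ℕ} (i : Fin N) (η : Cfg N) : Cfg N :=
  fun k => if k = i.castSucc then η i.succ else if k = i.succ then η i.castSucc else η k

/-- The exclusion jump rate `c_{i,i+1}(η) = p η_i(1−η_{i+1}) + (1−p) η_{i+1}(1−η_i)`. -/
noncomputable def cExc (p : ℝ) {N : ℕ} (i : Fin N) (η : Cfg N) : ℝ :=
  p * ind (η i.castSucc) * (1 - ind (η i.succ)) +
    (1 - p) * ind (η i.succ) * (1 - ind (η i.castSucc))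

/-- The exclusion generator
`L_exc g(η) = Σ_{i=0}^{N−1} (c_{i,i+1}(η) + σ/2)[g(η^{i,i+1}) − g(η)]`. -/
noncomputable def Lexc (p σ : ℝ) {N : ℕ} (g : Cfg N → ℝ) (η : Cfg N) : ℝ :=
  ∑ i : Fin N, (cExc p i η + σ / 2) * (g (swap i η) - g η)

/-- The product measure with marginals `ν_ρ^N(η_i = 1) = ρ(i/N)`. -/
noncomputable def nuRho (ρ : ℝ → ℝ) (N : ℕ) (η : Cfg N) : ℝ :=
  ∏ i : Fin (N + 1), (if η i then ρ ((i.val : ℝ) / N) else 1 - ρ ((i.val : ℝ) / N))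

/-- The exclusion Dirichlet form
`D_exc^N(μ;ν) = (1/2) Σ_η Σ_{i=0}^{N−1} (√(f(η^{i,i+1})) − √(f(η)))² ν(η)`,
where `f = dμ/dν`. -/
noncomputable def Dexc (N : ℕ) (f ν : Cfg N → ℝ) : ℝ :=
  (1 / 2) * ∑ η : Cfg N, ∑ i : Fin N,
    (Real.sqrt (f (swap i η)) - Real.sqrt (f η)) ^ 2 * ν η

lemma swap_castSucc {N : ℕ} (i : Fin N) (η : Cfg N) : swap i η i.castSucc = η i.succ := by
  simp [swap]

lemma succ_ne_castSucc' {N : ℕ} (i : Fin N) : i.succ ≠ i.castSucc := by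
  intro h
  have := congrArg Fin.val h
  simp at this

lemma swap_succ {N : ℕ} (i : Fin N) (η : Cfg N) : swap i η i.succ = η i.castSucc := by
  simp [swap, succ_ne_castSucc']

lemma swap_swap {N : ℕ} (i : Fin N) (η : Cfg N) : swap i (swap i η) = η := by
  funext k
  by_cases h1 : k = i.castSucc
  · subst h1
    rw [swap_castSucc, swap_succ]
  · by_cases h2 : k = i.succ
    · subst h2
      rw [swap_succ, swap_castSucc]
    · simp [swap, h1, h2]

lemma sum_swap {N : ℕ} (i : Fin N) (F : Cfg N → ℝ) :
    ∑ η : Cfg N, F (swap i η) = ∑ η : Cfg N, F η :=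
  Equiv.sum_comp (Function.Involutive.toPerm (swap i) (swap_swap i)) F

lemma nu_pos (ρ : ℝ → ℝ) (N : ℕ) (hN : 1 ≤ N)
    (hρmem : ∀ x ∈ Set.Icc (0 : ℝ) 1, ρ x ∈ Set.Ioo (0 : ℝ) 1) (η : Cfg N) :
    0 < nuRho ρ N η := by
  unfold nuRho
  apply Finset.prod_pos
  intro i _
  have hN' : (0 : ℝ) < N := by exact_mod_cast hN
  have hi : ((i.val : ℝ) / N) ∈ Set.Icc (0 : ℝ) 1 := by
    refine ⟨by positivity, ?_⟩
    rw [div_le_one hN']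
    exact_mod_cast Nat.lt_succ_iff.mp i.isLt
  have := hρmem _ hi
  split_ifs
  · exact this.1
  · linarith [this.2]

lemma nu_ratio (ρ : ℝ → ℝ) (m L : ℝ) (hm : 0 < m) (hL : 0 ≤ L)
    (hlo : ∀ x ∈ Set.Icc (0 : ℝ) 1, m ≤ ρ x ∧ ρ x ≤ 1 - m)
    (hlip : ∀ x ∈ Set.Icc (0 : ℝ) 1, ∀ y ∈ Set.Icc (0 : ℝ) 1, |ρ x - ρ y| ≤ L * |x - y|)
    (N : ℕ) (hN : 1 ≤ N) (i : Fin N) (η : Cfg N) :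
    |nuRho ρ N (swap i η) - nuRho ρ N η| ≤ (L / m ^ 2) / N * nuRho ρ N η := by
  have hN' : (0 : ℝ) < N := by exact_mod_cast hN
  have hmem : ∀ k : Fin (N + 1), ((k.val : ℝ) / N) ∈ Set.Icc (0 : ℝ) 1 := by
    intro k
    refine ⟨by positivity, ?_⟩
    rw [div_le_one hN']
    exact_mod_cast Nat.lt_succ_iff.mp k.isLt
  set w : Fin (N + 1) → Bool → ℝ :=
    fun k b => if b then ρ ((k.val : ℝ) / N) else 1 - ρ ((k.val : ℝ) / N) with hw
  have hwm : ∀ k b, m ≤ w k b := by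
    intro k b
    have := hlo _ (hmem k)
    simp only [hw]
    split_ifs <;> linarith
  have hsplit : ∀ ζ : Cfg N, nuRho ρ N ζ = w i.castSucc (ζ i.castSucc) *
      (w i.succ (ζ i.succ) *
        ∏ k ∈ (Finset.univ.erase i.castSucc).erase i.succ, w k (ζ k)) := by
    intro ζ
    rw [Finset.mul_prod_erase (Finset.univ.erase i.castSucc) (fun k => w k (ζ k))
      (by simp [succ_ne_castSucc']),
      Finset.mul_prod_erase Finset.univ (fun k => w k (ζ k)) (by simp)]
    rfl
  have hrest : ∏ k ∈ (Finset.univ.erase i.castSucc).erase i.succ, w k (swap i η k)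
      = ∏ k ∈ (Finset.univ.erase i.castSucc).erase i.succ, w k (η k) := by
    apply Finset.prod_congr rfl
    intro k hk
    simp only [Finset.mem_erase, Finset.mem_univ, and_true] at hk
    simp [swap, hk.1, hk.2]
  rw [hsplit (swap i η), hsplit η, hrest, swap_castSucc, swap_succ]
  set R := ∏ k ∈ (Finset.univ.erase i.castSucc).erase i.succ, w k (η k) with hR
  have hRpos : 0 ≤ R := Finset.prod_nonneg fun k _ => hm.le.trans (hwm k _)
  have h1 := hwm i.castSucc (η i.castSucc)
  have h2 := hwm i.succ (η i.succ)
  have hprod : m ^ 2 ≤ w i.castSucc (η i.castSucc) * w i.succ (η i.succ) := by nlinarith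
  have hd : |ρ ((i.castSucc.val : ℝ) / N) - ρ ((i.succ.val : ℝ) / N)| ≤ L / N := by
    refine (hlip _ (hmem _) _ (hmem _)).trans (le_of_eq ?_)
    have : ((i.castSucc.val : ℝ) / N) - ((i.succ.val : ℝ) / N) = - (1 / N) := by
      simp only [Fin.val_castSucc, Fin.val_succ]
      push_cast
      ring
    rw [this, abs_neg, abs_of_pos (by positivity)]
    ring
  have hdiff : |w i.castSucc (η i.succ) * w i.succ (η i.castSucc)
      - w i.castSucc (η i.castSucc) * w i.succ (η i.succ)| ≤ L / N := by
    have hd0 : (0 : ℝ) ≤ L / N := by positivity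
    rw [abs_le] at hd ⊢
    simp only [hw]
    generalize ρ ((i.castSucc.val : ℝ) / N) = u at hd ⊢
    generalize ρ ((i.succ.val : ℝ) / N) = v at hd ⊢
    obtain ⟨hd1, hd2⟩ := hd
    cases η i.castSucc <;> cases η i.succ <;> constructor <;> simp <;> nlinarith
  have e : w i.castSucc (η i.succ) * (w i.succ (η i.castSucc) * R)
      - w i.castSucc (η i.castSucc) * (w i.succ (η i.succ) * R)
      = (w i.castSucc (η i.succ) * w i.succ (η i.castSucc)
      - w i.castSucc (η i.castSucc) * w i.succ (η i.succ)) * R := by ring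
  rw [e, abs_mul, abs_of_nonneg hRpos]
  have e2 : L / m ^ 2 / N * (w i.castSucc (η i.castSucc) * (w i.succ (η i.succ) * R))
      = (L / m ^ 2 / N * (w i.castSucc (η i.castSucc) * w i.succ (η i.succ))) * R := by ring
  rw [e2]
  apply mul_le_mul_of_nonneg_right _ hRpos
  refine hdiff.trans ?_
  calc L / N = L / m ^ 2 / N * m ^ 2 := by field_simp
    _ ≤ _ := mul_le_mul_of_nonneg_left hprod (by positivity)

lemma sum_sq_diff {N : ℕ} (i : Fin N) (g ν : Cfg N → ℝ) (κ : ℝ)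
    (hν : ∀ η, 0 < ν η) (hr : ∀ η, |ν (swap i η) - ν η| ≤ κ * ν η)
    (hg : ∑ η, g η ^ 2 * ν η = 1) :
    ∑ η, (g (swap i η) ^ 2 - g η ^ 2) * ν η ≤
      (1 / 2) * ∑ η, (g (swap i η) - g η) ^ 2 * ν η + κ ^ 2 * (2 + κ) / 4 := by
  have h1 : ∑ η, (g (swap i η) ^ 2 - g η ^ 2) * ν η
      = ∑ η, (g η ^ 2 - g (swap i η) ^ 2) * ν (swap i η) := by
    rw [← sum_swap i]
    simp only [swap_swap]
  have h2 : ∑ η, g (swap i η) ^ 2 * ν η ≤ 1 + κ := by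
    rw [← sum_swap i]
    simp only [swap_swap]
    calc ∑ η, g η ^ 2 * ν (swap i η) ≤ ∑ η, (1 + κ) * (g η ^ 2 * ν η) := by
          apply Finset.sum_le_sum
          intro η _
          have := (abs_le.mp (hr η)).2
          nlinarith [mul_le_mul_of_nonneg_left this (sq_nonneg (g η))]
      _ = 1 + κ := by rw [← Finset.mul_sum, hg, mul_one]
  have h3 : ∑ η, (g (swap i η) ^ 2 - g η ^ 2) * ν η
      + ∑ η, (g η ^ 2 - g (swap i η) ^ 2) * ν (swap i η)
      ≤ ∑ η, ((g (swap i η) - g η) ^ 2 * ν η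
        + κ ^ 2 / 2 * (g η ^ 2 * ν η + g (swap i η) ^ 2 * ν η)) := by
    rw [← Finset.sum_add_distrib]
    apply Finset.sum_le_sum
    intro η _
    set x := g (swap i η) - g η with hx
    set y := g (swap i η) + g η with hy
    have e : (g (swap i η) ^ 2 - g η ^ 2) * ν η + (g η ^ 2 - g (swap i η) ^ 2) * ν (swap i η)
        = (x * y) * (ν η - ν (swap i η)) := by rw [hx, hy]; ring
    have b1 : (x * y) * (ν η - ν (swap i η)) ≤ (|x| * |y|) * (κ * ν η) := by
      refine (le_abs_self _).trans ?_
      rw [abs_mul, abs_mul]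
      apply mul_le_mul_of_nonneg_left _ (by positivity)
      rw [abs_sub_comm]
      exact hr η
    have b2 : |x| * |y| * κ ≤ x ^ 2 + κ ^ 2 / 4 * y ^ 2 := by
      rw [← sq_abs x, ← sq_abs y]
      nlinarith [sq_nonneg (|x| - κ / 2 * |y|)]
    have b3 : y ^ 2 ≤ 2 * (g η ^ 2 + g (swap i η) ^ 2) := by
      rw [hy]; nlinarith [sq_nonneg (g η - g (swap i η))]
    have b4 : |x| * |y| * κ ≤ x ^ 2 + κ ^ 2 / 2 * (g η ^ 2 + g (swap i η) ^ 2) := by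
      nlinarith [mul_le_mul_of_nonneg_left b3 (sq_nonneg κ)]
    have b5 := mul_le_mul_of_nonneg_right b4 (hν η).le
    rw [e]
    nlinarith
  rw [Finset.sum_add_distrib, ← Finset.mul_sum, Finset.sum_add_distrib, hg] at h3
  nlinarith [mul_le_mul_of_nonneg_left h2 (sq_nonneg κ)]

lemma cExc_mem (p : ℝ) (hp : p ∈ Set.Ioc (1 / 2 : ℝ) 1) {N : ℕ} (i : Fin N) (η : Cfg N) :
    0 ≤ cExc p i η ∧ cExc p i η ≤ 1 := by
  obtain ⟨h1, h2⟩ := hp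
  unfold cExc ind
  cases η i.castSucc <;> cases η i.succ <;> constructor <;> simp <;> linarith

lemma cExc_diff (p : ℝ) {N : ℕ} (i : Fin N) (η : Cfg N) :
    cExc p i (swap i η) - cExc p i η
      = (2 * p - 1) * (ind (η i.succ) - ind (η i.castSucc)) := by
  unfold cExc
  rw [swap_castSucc, swap_succ]
  ring

lemma c_part (p : ℝ) (hp : p ∈ Set.Ioc (1 / 2 : ℝ) 1) {N : ℕ} (i : Fin N) (g ν : Cfg N → ℝ)
    (κ : ℝ) (hν : ∀ η, 0 < ν η) (hr : ∀ η, |ν (swap i η) - ν η| ≤ κ * ν η)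
    (hg : ∑ η, g η ^ 2 * ν η = 1) :
    ∑ η, g η * (cExc p i η * (g (swap i η) - g η)) * ν η ≤
      (2 * p - 1) / 2 * ∑ η, (ind (η i.succ) - ind (η i.castSucc)) * (g η ^ 2 * ν η) + κ / 2 := by
  have h1 : ∑ η, g η * (cExc p i η * (g (swap i η) - g η)) * ν η
      ≤ ∑ η, (1 / 2 * (cExc p i η * g (swap i η) ^ 2 * ν η)
        - 1 / 2 * (cExc p i η * g η ^ 2 * ν η)) := by
    apply Finset.sum_le_sum
    intro η _
    have := mul_nonneg (mul_nonneg (cExc_mem p hp i η).1 (hν η).le)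
      (sq_nonneg (g (swap i η) - g η))
    nlinarith
  have h2 : ∑ η, cExc p i η * g (swap i η) ^ 2 * ν η
      = ∑ η, cExc p i (swap i η) * g η ^ 2 * ν (swap i η) := by
    rw [← sum_swap i]
    simp only [swap_swap]
  rw [Finset.sum_sub_distrib, ← Finset.mul_sum, h2, Finset.mul_sum, ← Finset.sum_sub_distrib] at h1
  refine h1.trans ?_
  have h3 : κ / 2 = ∑ η, κ / 2 * (g η ^ 2 * ν η) := by rw [← Finset.mul_sum, hg, mul_one]
  rw [h3, Finset.mul_sum, ← Finset.sum_add_distrib]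
  apply Finset.sum_le_sum
  intro η _
  have hc := cExc_mem p hp i (swap i η)
  have hd := cExc_diff p i η
  have a1 : cExc p i (swap i η) * (ν (swap i η) - ν η) ≤ κ * ν η := by
    have := hr η
    calc _ ≤ cExc p i (swap i η) * |ν (swap i η) - ν η| :=
          mul_le_mul_of_nonneg_left (le_abs_self _) hc.1
      _ ≤ 1 * |ν (swap i η) - ν η| := mul_le_mul_of_nonneg_right hc.2 (abs_nonneg _)
      _ ≤ _ := by rw [one_mul]; exact this
  have a2 := mul_le_mul_of_nonneg_left a1 (sq_nonneg (g η))
  have e : (2 * p - 1) / 2 * ((ind (η i.succ) - ind (η i.castSucc)) * (g η ^ 2 * ν η))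
      = 1 / 2 * (cExc p i (swap i η) - cExc p i η) * (g η ^ 2 * ν η) := by rw [hd]; ring
  rw [e]
  nlinarith

lemma ind_mem (b : Bool) : 0 ≤ ind b ∧ ind b ≤ 1 := by
  cases b <;> simp [ind]

lemma telescope {N : ℕ} (η : Cfg N) :
    ∑ i : Fin N, (ind (η i.succ) - ind (η i.castSucc)) ≤ 1 := by
  have h1 := Fin.sum_univ_succ (fun k : Fin (N + 1) => ind (η k))
  have h2 := Fin.sum_univ_castSucc (fun k : Fin (N + 1) => ind (η k))
  rw [Finset.sum_sub_distrib]
  have := ind_mem (η 0)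
  have := ind_mem (η (Fin.last N))
  linarith

lemma main_bound (p : ℝ) (hp : p ∈ Set.Ioc (1 / 2 : ℝ) 1) (K : ℝ) (hK : 0 ≤ K) (N : ℕ)
    (hN : 1 ≤ N) (σ : ℝ) (h0 : 0 ≤ σ) (hσ : σ ≤ N) (g ν : Cfg N → ℝ) (hν : ∀ η, 0 < ν η)
    (hr : ∀ i η, |ν (swap i η) - ν η| ≤ K / N * ν η) (hg : ∑ η, g η ^ 2 * ν η = 1) :
    ∑ η, g η * Lexc p σ g η * ν η ≤
      -((σ - 1) / 4) * ((1 / 2) * ∑ η, ∑ i : Fin N, (g (swap i η) - g η) ^ 2 * ν η)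
        + (K ^ 2 * (2 + K) / 16 + (1 + K) / 2) := by
  have hN1 : (1 : ℝ) ≤ N := by exact_mod_cast hN
  have hN' : (0 : ℝ) < N := by linarith
  rw [Finset.sum_comm]
  set X : Fin N → ℝ := fun i => ∑ η, (g (swap i η) - g η) ^ 2 * ν η with hX
  have hXn : 0 ≤ ∑ i, X i := Finset.sum_nonneg fun i _ => Finset.sum_nonneg fun η _ =>
    mul_nonneg (sq_nonneg _) (hν η).le
  have hE : ∑ η, g η * Lexc p σ g η * ν η
      = ∑ i : Fin N, (∑ η, g η * (cExc p i η * (g (swap i η) - g η)) * ν η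
        + (σ / 2) * (-(1 / 2) * X i + 1 / 2 * ∑ η, (g (swap i η) ^ 2 - g η ^ 2) * ν η)) := by
    simp only [Lexc, hX, Finset.mul_sum, Finset.sum_mul, ← Finset.sum_add_distrib]
    rw [Finset.sum_comm]
    apply Finset.sum_congr rfl
    intro i _
    apply Finset.sum_congr rfl
    intro η _
    ring
  have hκ : 0 ≤ K / N := by positivity
  have hκK : K / N ≤ K := div_le_self hK hN1
  have hstep : ∀ i : Fin N, (∑ η, g η * (cExc p i η * (g (swap i η) - g η)) * ν η
        + (σ / 2) * (-(1 / 2) * X i + 1 / 2 * ∑ η, (g (swap i η) ^ 2 - g η ^ 2) * ν η))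
      ≤ (2 * p - 1) / 2 * (∑ η, (ind (η i.succ) - ind (η i.castSucc)) * (g η ^ 2 * ν η))
        - σ / 8 * X i + (K / N / 2 + K ^ 2 * (2 + K) / 16 / N) := by
    intro i
    have a := c_part p hp i g ν (K / N) hν (hr i) hg
    have b := sum_sq_diff i g ν (K / N) hν (hr i) hg
    have b' := mul_le_mul_of_nonneg_left b (show 0 ≤ σ / 4 by positivity)
    have c : σ / 4 * ((K / N) ^ 2 * (2 + K / N) / 4) ≤ K ^ 2 * (2 + K) / 16 / N := by
      calc σ / 4 * ((K / N) ^ 2 * (2 + K / N) / 4)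
          ≤ N / 4 * ((K / N) ^ 2 * (2 + K) / 4) := by gcongr
        _ = _ := by field_simp; ring
    have : (1 / 2 * ∑ η, (g (swap i η) - g η) ^ 2 * ν η) = 1 / 2 * X i := rfl
    rw [this] at b'
    nlinarith
  have hsum := Finset.sum_le_sum (fun i (_ : i ∈ Finset.univ) => hstep i)
  rw [← hE] at hsum
  rw [Finset.sum_add_distrib, Finset.sum_sub_distrib, ← Finset.mul_sum, ← Finset.mul_sum,
    Finset.sum_const, Finset.card_univ, Fintype.card_fin, nsmul_eq_mul] at hsum
  have hT : ∑ i : Fin N, ∑ η, (ind (η i.succ) - ind (η i.castSucc)) * (g η ^ 2 * ν η) ≤ 1 := by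
    rw [Finset.sum_comm, ← hg]
    apply Finset.sum_le_sum
    intro η _
    rw [← Finset.sum_mul]
    have := mul_le_mul_of_nonneg_right (telescope η) (mul_nonneg (sq_nonneg (g η)) (hν η).le)
    linarith
  have hT' : (2 * p - 1) / 2 *
      ∑ i : Fin N, ∑ η, (ind (η i.succ) - ind (η i.castSucc)) * (g η ^ 2 * ν η) ≤ 1 / 2 := by
    obtain ⟨p1, p2⟩ := hp
    have := mul_le_mul_of_nonneg_left hT (show 0 ≤ (2 * p - 1) / 2 by linarith)
    linarith
  have hc : (N : ℝ) * (K / N / 2 + K ^ 2 * (2 + K) / 16 / N) = K / 2 + K ^ 2 * (2 + K) / 16 := by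
    field_simp
  rw [hc] at hsum
  nlinarith

/-- there is a constant `C` (depending only on `p` and `ρ`) such
that for all `N ≥ 1`, all `σ ∈ [0,N]` and every probability density `f` with
respect to `ν_ρ^N`,
`⟨√f, L_exc[√f]⟩_{ν_ρ^N} ≤ −((σ−1)/4) D_exc^N(μ;ν_ρ^N) + C`. -/
theorem exclusion_sqrt_dirichlet_bound (p : ℝ) (hp : p ∈ Set.Ioc (1 / 2 : ℝ) 1)
    (ρ : ℝ → ℝ)
    (hρ : ContDiffOn ℝ 1 ρ (Set.Icc 0 1))
    (hρmem : ∀ x ∈ Set.Icc (0 : ℝ) 1, ρ x ∈ Set.Ioo (0 : ℝ) 1) :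
    ∃ C : ℝ, ∀ N : ℕ, 1 ≤ N → ∀ σ : ℝ, 0 ≤ σ → σ ≤ N →
      ∀ f : Cfg N → ℝ, (∀ η, 0 < f η) →
        (∑ η : Cfg N, f η * nuRho ρ N η) = 1 →
        ∑ η : Cfg N, Real.sqrt (f η) *
            Lexc p σ (fun ζ => Real.sqrt (f ζ)) η * nuRho ρ N η
          ≤ -((σ - 1) / 4) * Dexc N f (nuRho ρ N) + C := by
  obtain ⟨L, hL⟩ := hρ.exists_lipschitzOnWith (by norm_num) (convex_Icc 0 1) isCompact_Icc
  have hcont := hρ.continuousOn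
  have hne : (Set.Icc (0 : ℝ) 1).Nonempty := ⟨0, by simp⟩
  obtain ⟨a, ha, hamin⟩ := isCompact_Icc.exists_isMinOn hne hcont
  obtain ⟨b, hb, hbmax⟩ := isCompact_Icc.exists_isMaxOn hne hcont
  have ha' := hρmem a ha
  have hb' := hρmem b hb
  set m := min (ρ a) (1 - ρ b) with hm
  have hmpos : 0 < m := lt_min ha'.1 (by linarith [hb'.2])
  have hlo : ∀ x ∈ Set.Icc (0 : ℝ) 1, m ≤ ρ x ∧ ρ x ≤ 1 - m := by
    intro x hx
    have h1 : ρ a ≤ ρ x := hamin hx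
    have h2 : ρ x ≤ ρ b := hbmax hx
    have h3 := min_le_left (ρ a) (1 - ρ b)
    have h4 := min_le_right (ρ a) (1 - ρ b)
    constructor <;> linarith
  have hlip : ∀ x ∈ Set.Icc (0 : ℝ) 1, ∀ y ∈ Set.Icc (0 : ℝ) 1,
      |ρ x - ρ y| ≤ (L : ℝ) * |x - y| := by
    intro x hx y hy
    have := hL.dist_le_mul x hx y hy
    simpa [Real.dist_eq] using this
  refine ⟨_, fun N hN σ h0 hσ f hf hsum =>
    main_bound p hp ((L : ℝ) / m ^ 2) (by positivity) N hN σ h0 hσ (fun η => Real.sqrt (f η))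
      (nuRho ρ N) (nu_pos ρ N hN hρmem)
      (fun i η => nu_ratio ρ m L hmpos L.coe_nonneg hlo hlip N hN i η) ?_⟩
  rw [← hsum]
  exact Finset.sum_congr rfl fun η _ => by rw [Real.sq_sqrt (hf η).le]
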